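/- arXiv:math/9801022 — 2 statements merged into one kernel-verified Lean document; each statement's English description precedes it below -/
import Mathlib

section
/- Let Ω ⊆ ℂ be open, U : Ω → ℝ, and let ψ = (ψ₁, ψ₂) satisfy the Dirac equation 𝒟ψ = 0 on Ω. Then the three 1-forms appearing in the Weierstrass representation formulas are closed; explicitly, on Ω: ∂̄(conj(ψ₂)² + ψ₁²) + ∂(conj(ψ₁)² + ψ₂²) = 0, ∂̄(conj(ψ₂)² − ψ₁²) + ∂(conj(ψ₁)² − ψ₂²) = 0, and ∂̄(ψ₁·conj(ψ₂)) = ∂(conj(ψ₁)·ψ₂). -/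
open Complex

/-- The Wirtinger derivative ∂f = (1/2)(∂f/∂x − i ∂f/∂y). -/
noncomputable def wd (f : ℂ → ℂ) (z : ℂ) : ℂ :=
  (1 / 2) * (fderiv ℝ f z 1 - Complex.I * fderiv ℝ f z Complex.I)

/-- The Wirtinger derivative ∂̄f = (1/2)(∂f/∂x + i ∂f/∂y). -/
noncomputable def wdbar (f : ℂ → ℂ) (z : ℂ) : ℂ :=
  (1 / 2) * (fderiv ℝ f z 1 + Complex.I * fderiv ℝ f z Complex.I)

/-- ψ = (ψ₁, ψ₂) satisfies the Dirac equation 𝒟ψ = 0 with potential U on Ω. -/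
def DiracEq (Ω : Set ℂ) (U : ℂ → ℝ) (ψ₁ ψ₂ : ℂ → ℂ) : Prop :=
  ∀ z ∈ Ω, wd ψ₂ z + (U z : ℂ) * ψ₁ z = 0 ∧ wdbar ψ₁ z = (U z : ℂ) * ψ₂ z

/-!
Conjugation exchanges `∂` and `∂̄`. Hence the parts `conj ψ₂ ^ 2` and `conj ψ₁ ^ 2` of the first
two identities contribute the conjugate of `∂̄(ψ₁ ^ 2) + ∂(ψ₂ ^ 2)`, which is
`2 U ψ₁ ψ₂ - 2 U ψ₁ ψ₂ = 0`. In the third identity the two sides are conjugate to each other, and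
the left one is the real number `U (|ψ₂| ^ 2 - |ψ₁| ^ 2)`.
-/

open scoped ComplexConjugate

section Wirtinger

variable {f g : ℂ → ℂ} {z : ℂ}

theorem wd_fun_add (hf : DifferentiableAt ℝ f z) (hg : DifferentiableAt ℝ g z) :
    wd (fun w => f w + g w) z = wd f z + wd g z := by
  simp only [wd, fderiv_fun_add hf hg, _root_.add_apply]
  ring

theorem wdbar_fun_add (hf : DifferentiableAt ℝ f z) (hg : DifferentiableAt ℝ g z) :
    wdbar (fun w => f w + g w) z = wdbar f z + wdbar g z := by
  simp only [wdbar, fderiv_fun_add hf hg, _root_.add_apply]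
  ring

theorem wd_fun_sub (hf : DifferentiableAt ℝ f z) (hg : DifferentiableAt ℝ g z) :
    wd (fun w => f w - g w) z = wd f z - wd g z := by
  simp only [wd, fderiv_fun_sub hf hg, _root_.sub_apply]
  ring

theorem wdbar_fun_sub (hf : DifferentiableAt ℝ f z) (hg : DifferentiableAt ℝ g z) :
    wdbar (fun w => f w - g w) z = wdbar f z - wdbar g z := by
  simp only [wdbar, fderiv_fun_sub hf hg, _root_.sub_apply]
  ring

theorem wdbar_fun_mul (hf : DifferentiableAt ℝ f z) (hg : DifferentiableAt ℝ g z) :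
    wdbar (fun w => f w * g w) z = f z * wdbar g z + g z * wdbar f z := by
  simp only [wdbar, fderiv_fun_mul hf hg, _root_.add_apply, _root_.smul_apply, smul_eq_mul]
  ring

theorem wd_fun_pow (hf : DifferentiableAt ℝ f z) (n : ℕ) :
    wd (fun w => f w ^ n) z = n * f z ^ (n - 1) * wd f z := by
  simp only [wd, fderiv_fun_pow n hf, _root_.smul_apply, smul_eq_mul, nsmul_eq_mul]
  ring

theorem wdbar_fun_pow (hf : DifferentiableAt ℝ f z) (n : ℕ) :
    wdbar (fun w => f w ^ n) z = n * f z ^ (n - 1) * wdbar f z := by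
  simp only [wdbar, fderiv_fun_pow n hf, _root_.smul_apply, smul_eq_mul, nsmul_eq_mul]
  ring

theorem fderiv_conj_apply (f : ℂ → ℂ) (z v : ℂ) :
    fderiv ℝ (fun w => conj (f w)) z v = conj (fderiv ℝ f z v) :=
  congrArg (fun L : ℂ →L[ℝ] ℂ => L v) fderiv_star

theorem wd_conj (f : ℂ → ℂ) (z : ℂ) : wd (fun w => conj (f w)) z = conj (wdbar f z) := by
  simp only [wd, wdbar, fderiv_conj_apply, map_mul, map_add, map_div₀, map_one, map_ofNat, conj_I]
  ring

theorem wdbar_conj (f : ℂ → ℂ) (z : ℂ) : wdbar (fun w => conj (f w)) z = conj (wd f z) := by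
  simp only [wd, wdbar, fderiv_conj_apply, map_mul, map_sub, map_div₀, map_one, map_ofNat, conj_I]
  ring

end Wirtinger

namespace DiracEq

variable {Ω : Set ℂ} {U : ℂ → ℝ} {ψ₁ ψ₂ : ℂ → ℂ} {z : ℂ}

theorem wd_eq (hψ : DiracEq Ω U ψ₁ ψ₂) (hz : z ∈ Ω) : wd ψ₂ z = -(U z * ψ₁ z) :=
  eq_neg_of_add_eq_zero_left (hψ z hz).1

theorem wdbar_eq (hψ : DiracEq Ω U ψ₁ ψ₂) (hz : z ∈ Ω) : wdbar ψ₁ z = U z * ψ₂ z :=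
  (hψ z hz).2

theorem wdbar_sq_add_wd_sq (hψ : DiracEq Ω U ψ₁ ψ₂) (hz : z ∈ Ω)
    (h₁ : DifferentiableAt ℝ ψ₁ z) (h₂ : DifferentiableAt ℝ ψ₂ z) :
    wdbar (fun w => ψ₁ w ^ 2) z + wd (fun w => ψ₂ w ^ 2) z = 0 := by
  rw [wdbar_fun_pow h₁, wd_fun_pow h₂, hψ.wdbar_eq hz, hψ.wd_eq hz]
  ring

theorem wdbar_conj_sq_add_wd_conj_sq (hψ : DiracEq Ω U ψ₁ ψ₂) (hz : z ∈ Ω)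
    (h₁ : DifferentiableAt ℝ ψ₁ z) (h₂ : DifferentiableAt ℝ ψ₂ z) :
    wdbar (fun w => conj (ψ₂ w) ^ 2) z + wd (fun w => conj (ψ₁ w) ^ 2) z = 0 := by
  simp only [← map_pow]
  rw [wdbar_conj, wd_conj, ← map_add, add_comm, hψ.wdbar_sq_add_wd_sq hz h₁ h₂, map_zero]

theorem wdbar_mul_conj (hψ : DiracEq Ω U ψ₁ ψ₂) (hz : z ∈ Ω)
    (h₁ : DifferentiableAt ℝ ψ₁ z) (h₂ : DifferentiableAt ℝ ψ₂ z) :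
    wdbar (fun w => ψ₁ w * conj (ψ₂ w)) z =
      ((U z * (normSq (ψ₂ z) - normSq (ψ₁ z)) : ℝ) : ℂ) := by
  have hc₂ : DifferentiableAt ℝ (fun w => conj (ψ₂ w)) z := h₂.star
  rw [wdbar_fun_mul h₁ hc₂, wdbar_conj, hψ.wdbar_eq hz, hψ.wd_eq hz]
  simp only [map_neg, map_mul, conj_ofReal, ofReal_mul, ofReal_sub, ← mul_conj]
  ring

theorem wdbar_mul_conj_eq_wd_conj_mul (hψ : DiracEq Ω U ψ₁ ψ₂) (hz : z ∈ Ω)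
    (h₁ : DifferentiableAt ℝ ψ₁ z) (h₂ : DifferentiableAt ℝ ψ₂ z) :
    wdbar (fun w => ψ₁ w * conj (ψ₂ w)) z = wd (fun w => conj (ψ₁ w) * ψ₂ w) z :=
  calc
    wdbar (fun w => ψ₁ w * conj (ψ₂ w)) z
      = conj (wdbar (fun w => ψ₁ w * conj (ψ₂ w)) z) := by
        rw [hψ.wdbar_mul_conj hz h₁ h₂, conj_ofReal]
    _ = wd (fun w => conj (ψ₁ w) * ψ₂ w) z := by
        simp only [← wd_conj, map_mul, conj_conj]

end DiracEq

theorem stmt_4 (Ω : Set ℂ) (hΩ : IsOpen Ω) (U : ℂ → ℝ) (ψ₁ ψ₂ : ℂ → ℂ)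
    (h₁ : DifferentiableOn ℝ ψ₁ Ω) (h₂ : DifferentiableOn ℝ ψ₂ Ω)
    (hψ : DiracEq Ω U ψ₁ ψ₂) :
    ∀ z ∈ Ω,
      wdbar (fun w => (starRingEnd ℂ (ψ₂ w)) ^ 2 + ψ₁ w ^ 2) z +
        wd (fun w => (starRingEnd ℂ (ψ₁ w)) ^ 2 + ψ₂ w ^ 2) z = 0 ∧
      wdbar (fun w => (starRingEnd ℂ (ψ₂ w)) ^ 2 - ψ₁ w ^ 2) z +
        wd (fun w => (starRingEnd ℂ (ψ₁ w)) ^ 2 - ψ₂ w ^ 2) z = 0 ∧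
      wdbar (fun w => ψ₁ w * starRingEnd ℂ (ψ₂ w)) z =
        wd (fun w => starRingEnd ℂ (ψ₁ w) * ψ₂ w) z := by
  intro z hz
  have hd₁ : DifferentiableAt ℝ ψ₁ z := h₁.differentiableAt (hΩ.mem_nhds hz)
  have hd₂ : DifferentiableAt ℝ ψ₂ z := h₂.differentiableAt (hΩ.mem_nhds hz)
  have hc₁ : DifferentiableAt ℝ (fun w => conj (ψ₁ w)) z := hd₁.star
  have hc₂ : DifferentiableAt ℝ (fun w => conj (ψ₂ w)) z := hd₂.star
  have h_sq := hψ.wdbar_sq_add_wd_sq hz hd₁ hd₂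
  have h_conj_sq := hψ.wdbar_conj_sq_add_wd_conj_sq hz hd₁ hd₂
  refine ⟨?_, ?_, hψ.wdbar_mul_conj_eq_wd_conj_mul hz hd₁ hd₂⟩
  · rw [wdbar_fun_add (hc₂.fun_pow 2) (hd₁.fun_pow 2),
      wd_fun_add (hc₁.fun_pow 2) (hd₂.fun_pow 2)]
    linear_combination h_conj_sq + h_sq
  · rw [wdbar_fun_sub (hc₂.fun_pow 2) (hd₁.fun_pow 2),
      wd_fun_sub (hc₁.fun_pow 2) (hd₂.fun_pow 2)]
    linear_combination h_conj_sq - h_sq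
end

section
/- Let U : ℝ → ℝ be continuous with ∫_ℝ |U(x)| dx < ∞, and let k ∈ ℂ with Im k ≤ 0. Then there exists a unique bounded continuous function f = (f₁, f₂) : ℝ → ℂ² satisfying the Volterra integral equation f₁(x) = ∫_{−∞}^{x} e^{−2ik(x−x′)}·2U(x′)·f₂(x′) dx′ and f₂(x) = 1 − ∫_{−∞}^{x} 2U(x′)·f₁(x′) dx′ for all x ∈ ℝ; the solution is given by a uniformly convergent Neumann series. -/
open Complex MeasureTheory

/-!
Written as one equation in `ℂ × ℂ`, the system reads `f = g + T f` with `g = (0, 1)` and `T` the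
Volterra operator of a matrix kernel dominated by `a = 2 |U|`; the condition `Im k ≤ 0` is what
keeps the exponential bounded by `1` for `x' ≤ x`. With `A x = ∫ y in Iic x, a y`, the identity
`∫ y in Iic x, a y * A y ^ n = A x ^ (n + 1) / (n + 1)` gives by induction
`‖(T ^ n) f x‖ ≤ A x ^ n / n ! * ‖f‖`. Hence `∑ T ^ n` converges in operator norm on bounded
continuous functions and inverts `1 - T`: the only solution is the Neumann series `∑ (T ^ n) g`,
which converges uniformly. For merely integrable `a` the identity is the fundamental theorem of
calculus for the absolutely continuous function `A ^ (n + 1)`.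
-/

section NeumannSeries

variable {𝕜 V : Type*} [NontriviallyNormedField 𝕜] [NormedAddCommGroup V] [NormedSpace 𝕜 V]

theorem hasSum_pow_apply_iff_eq_add {T : V →L[𝕜] V} (hT : Summable (T ^ ·)) {g f : V} :
    HasSum (fun n => (T ^ n) g) f ↔ f = g + T f := by
  have hsum : HasSum (fun n => (T ^ n) g) ((∑' n, T ^ n) g) := by
    simpa using (ContinuousLinearMap.apply 𝕜 V g).hasSum hT.hasSum
  have hright : ∀ v, (∑' n, T ^ n) v - T ((∑' n, T ^ n) v) = v := fun v => by
    simpa using congr($(hT.one_sub_mul_tsum_pow) v)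
  have hleft : ∀ v, (∑' n, T ^ n) (v - T v) = v := fun v => by
    simpa using congr($(hT.tsum_pow_mul_one_sub) v)
  constructor
  · intro hf
    rw [hf.unique hsum, ← sub_eq_iff_eq_add, hright]
  · intro hf
    rw [← sub_eq_iff_eq_add] at hf
    rwa [← hf, hleft f, hf] at hsum

end NeumannSeries

section BoundedContinuous

open scoped BoundedContinuousFunction

theorem existsUnique_boundedContinuousFunction_iff {α β : Type*} [TopologicalSpace α]
    [PseudoMetricSpace β] {p : (α → β) → Prop} :
    (∃! f : α →ᵇ β, p f) ↔
      ∃! f : α → β, (Continuous f ∧ Bornology.IsBounded (Set.range f)) ∧ p f := by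
  constructor
  · rintro ⟨f, hf, hunique⟩
    refine ⟨f, ⟨⟨f.continuous, f.isBounded_range⟩, hf⟩, ?_⟩
    rintro f' ⟨⟨hcont, hbdd⟩, hf'⟩
    exact congrArg DFunLike.coe (hunique ⟨⟨f', hcont⟩, Metric.isBounded_range_iff.1 hbdd⟩ hf')
  · rintro ⟨f, ⟨⟨hcont, hbdd⟩, hf⟩, hunique⟩
    exact ⟨⟨⟨f, hcont⟩, Metric.isBounded_range_iff.1 hbdd⟩, hf, fun f' hf' =>
      DFunLike.coe_injective (hunique f' ⟨⟨f'.continuous, f'.isBounded_range⟩, hf'⟩)⟩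

end BoundedContinuous

section PrimitiveFromBot

open Set Filter
open scoped Topology

theorem norm_setIntegral_le_integral_norm {α E : Type*} [MeasurableSpace α] {μ : Measure α}
    [NormedAddCommGroup E] [NormedSpace ℝ E] {f : α → E} (hf : Integrable f μ) (s : Set α) :
    ‖∫ y in s, f y ∂μ‖ ≤ ∫ y, ‖f y‖ ∂μ :=
  (norm_integral_le_integral_norm f).trans
    (setIntegral_le_integral hf.norm (.of_forall fun _ => norm_nonneg _))

section Banach

variable {E : Type*} [NormedAddCommGroup E] [NormedSpace ℝ E] {a : ℝ → E}

theorem integral_Iic_eq_add_intervalIntegral (ha : Integrable a) (b x : ℝ) :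
    ∫ y in Iic x, a y = (∫ y in Iic b, a y) + ∫ y in b..x, a y := by
  rw [← intervalIntegral.integral_Iic_sub_Iic ha.integrableOn ha.integrableOn, add_sub_cancel]

theorem continuous_integral_Iic (ha : Integrable a) : Continuous fun x => ∫ y in Iic x, a y := by
  rw [funext (integral_Iic_eq_add_intervalIntegral ha 0)]
  exact (intervalIntegral.continuous_primitive (fun _ _ => ha.intervalIntegrable) 0).const_add _

theorem ae_hasDerivAt_integral_Iic [CompleteSpace E] (ha : Integrable a) :
    ∀ᵐ x, HasDerivAt (fun u => ∫ y in Iic u, a y) (a x) x := by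
  rw [funext (integral_Iic_eq_add_intervalIntegral ha 0)]
  filter_upwards [LocallyIntegrable.ae_hasDerivAt_integral ha.locallyIntegrable] with x hx
  exact (hx 0).const_add _

end Banach

theorem absolutelyContinuousOnInterval_integral_Iic {a : ℝ → ℝ} (ha : Integrable a) (b c : ℝ) :
    AbsolutelyContinuousOnInterval (fun x => ∫ y in Iic x, a y) b c := by
  rw [funext (integral_Iic_eq_add_intervalIntegral ha b)]
  exact contDiffOn_const.absolutelyContinuousOnInterval.fun_add
    (ha.intervalIntegrable.absolutelyContinuousOnInterval_intervalIntegral left_mem_uIcc)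

theorem absolutelyContinuousOnInterval_pow {F : ℝ → ℝ} {b c : ℝ}
    (hF : AbsolutelyContinuousOnInterval F b c) (n : ℕ) :
    AbsolutelyContinuousOnInterval (fun x => F x ^ n) b c := by
  induction n with
  | zero => simpa using (contDiffOn_const (c := (1 : ℝ))).absolutelyContinuousOnInterval
  | succ n ih => simpa only [pow_succ] using ih.fun_mul hF

variable {a : ℝ → ℝ}

theorem intervalIntegral_mul_integral_Iic_pow (ha : Integrable a) (n : ℕ) (b c : ℝ) :
    ∫ y in b..c, a y * (∫ z in Iic y, a z) ^ n =
      ((∫ z in Iic c, a z) ^ (n + 1) - (∫ z in Iic b, a z) ^ (n + 1)) / (n + 1) := by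
  rw [← (absolutelyContinuousOnInterval_pow
    (absolutelyContinuousOnInterval_integral_Iic ha b c) (n + 1)).integral_deriv_eq_sub,
    ← intervalIntegral.integral_div]
  refine intervalIntegral.integral_congr_ae ?_
  filter_upwards [ae_hasDerivAt_integral_Iic ha] with y hy _
  rw [(hy.fun_pow (n + 1)).deriv]
  push_cast
  field_simp

theorem integrable_mul_integral_Iic_pow (ha : Integrable a) (n : ℕ) :
    Integrable (fun y => a y * (∫ z in Iic y, a z) ^ n) := by
  refine ha.mul_bdd (c := (∫ y, ‖a y‖) ^ n)
    ((continuous_integral_Iic ha).pow n).aestronglyMeasurable (.of_forall fun y => ?_)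
  rw [norm_pow]
  gcongr
  exact norm_setIntegral_le_integral_norm ha _

theorem integral_Iic_mul_integral_Iic_pow (ha : Integrable a) (n : ℕ) (x : ℝ) :
    ∫ y in Iic x, a y * (∫ z in Iic y, a z) ^ n = (∫ y in Iic x, a y) ^ (n + 1) / (n + 1) := by
  have hleft := intervalIntegral_tendsto_integral_Iic x
    (integrable_mul_integral_Iic_pow ha n).integrableOn tendsto_id
  have hzero : Tendsto (fun b => ∫ z in Iic b, a z) atBot (𝓝 0) :=
    tendsto_integral_Iic_zero tendsto_id
  have hright :=
    ((hzero.pow (n + 1)).const_sub ((∫ y in Iic x, a y) ^ (n + 1))).div_const (n + 1 : ℝ)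
  simp only [id, intervalIntegral_mul_integral_Iic_pow ha] at hleft
  simpa using tendsto_nhds_unique hleft hright

end PrimitiveFromBot

section Volterra

open Set Filter
open scoped Topology BoundedContinuousFunction Nat

variable {E : Type*} [NormedAddCommGroup E] [NormedSpace ℝ E]

/-- `K` is an operator-valued Volterra kernel on the line, dominated by the integrable function `a`
of the integration variable. Only the values `K x y` with `y ≤ x` are constrained. -/
structure IsVolterraKernel (K : ℝ → ℝ → E →L[ℝ] E) (a : ℝ → ℝ) : Prop where
  integrable : Integrable a
  aestronglyMeasurable (x : ℝ) : AEStronglyMeasurable (K x) (volume.restrict (Iic x))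
  continuousOn (y : ℝ) : ContinuousOn (fun x => K x y) (Ioi y)
  norm_le {x y : ℝ} (hyx : y ≤ x) : ‖K x y‖ ≤ a y

namespace IsVolterraKernel

variable {K : ℝ → ℝ → E →L[ℝ] E} {a : ℝ → ℝ} (hK : IsVolterraKernel K a)
include hK

theorem bound_nonneg (y : ℝ) : 0 ≤ a y :=
  (norm_nonneg _).trans (hK.norm_le le_rfl)

theorem norm_apply_le {x y : ℝ} (hyx : y ≤ x) {v : E} {c : ℝ} (hv : ‖v‖ ≤ c) :
    ‖K x y v‖ ≤ a y * c :=
  (K x y).le_of_opNorm_le_of_le (hK.norm_le hyx) hv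

theorem norm_setIntegral_apply_le {f : ℝ → E} {b : ℝ → ℝ} (hf : ∀ y, ‖f y‖ ≤ b y)
    (hab : Integrable fun y => a y * b y) (x : ℝ) :
    ‖∫ y in Iic x, K x y (f y)‖ ≤ ∫ y in Iic x, a y * b y :=
  norm_integral_le_of_norm_le hab.integrableOn <|
    (ae_restrict_iff' measurableSet_Iic).2 (.of_forall fun y hy => hK.norm_apply_le hy (hf y))

theorem aestronglyMeasurable_apply {f : ℝ → E} {x : ℝ}
    (hf : AEStronglyMeasurable f (volume.restrict (Iic x))) :
    AEStronglyMeasurable (fun y => K x y (f y)) (volume.restrict (Iic x)) :=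
  isBoundedBilinearMap_apply.continuous.comp_aestronglyMeasurable₂
    (hK.aestronglyMeasurable x) hf

theorem integrableOn_apply (f : ℝ →ᵇ E) (x : ℝ) :
    IntegrableOn (fun y => K x y (f y)) (Iic x) :=
  (hK.integrable.mul_const ‖f‖).integrableOn.mono'
    (hK.aestronglyMeasurable_apply f.continuous.aestronglyMeasurable)
    ((ae_restrict_iff' measurableSet_Iic).2
      (.of_forall fun y hy => hK.norm_apply_le hy (f.norm_coe_le_norm y)))

theorem continuousAt_indicator_apply (f : ℝ → E) {x y : ℝ} (hxy : y ≠ x) :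
    ContinuousAt (fun u => (Iic u).indicator (fun z => K u z (f z)) y) x := by
  rcases hxy.lt_or_gt with hlt | hgt
  · have hcont : ContinuousAt (fun u => K u y (f y)) x :=
      ((hK.continuousOn y).continuousAt (Ioi_mem_nhds hlt)).clm_apply continuousAt_const
    refine hcont.congr ?_
    filter_upwards [Ioi_mem_nhds hlt] with u hu
    rw [indicator_of_mem (mem_Iic.2 (le_of_lt hu))]
  · refine (continuousAt_const (y := (0 : E))).congr ?_
    filter_upwards [Iio_mem_nhds hgt] with u hu
    rw [indicator_of_notMem (notMem_Iic.2 hu)]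

theorem continuous_setIntegral_apply (f : ℝ →ᵇ E) :
    Continuous fun x => ∫ y in Iic x, K x y (f y) := by
  simp_rw [← integral_indicator measurableSet_Iic]
  refine continuous_iff_continuousAt.2 fun x => continuousAt_of_dominated
    (bound := fun y => a y * ‖f‖) (.of_forall fun u => ?_)
    (.of_forall fun u => .of_forall fun y => ?_) (hK.integrable.mul_const _) ?_
  · exact (aestronglyMeasurable_indicator_iff measurableSet_Iic).2
      (hK.integrableOn_apply f u).aestronglyMeasurable
  · by_cases hyu : y ≤ u
    · rw [indicator_of_mem (mem_Iic.2 hyu)]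
      exact hK.norm_apply_le hyu (f.norm_coe_le_norm y)
    · rw [indicator_of_notMem (by simpa using hyu), norm_zero]
      exact mul_nonneg (hK.bound_nonneg y) (norm_nonneg f)
  · filter_upwards [Measure.ae_ne volume x] with y hy
    exact hK.continuousAt_indicator_apply f hy

theorem norm_setIntegral_apply_le_integral_mul_norm (f : ℝ →ᵇ E) (x : ℝ) :
    ‖∫ y in Iic x, K x y (f y)‖ ≤ (∫ y, a y) * ‖f‖ := by
  have hint := hK.integrable.mul_const ‖f‖
  refine (hK.norm_setIntegral_apply_le f.norm_coe_le_norm hint x).trans ?_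
  rw [← integral_mul_const]
  exact setIntegral_le_integral hint
    (.of_forall fun y => mul_nonneg (hK.bound_nonneg y) (norm_nonneg f))

/-- The Volterra operator `f ↦ (x ↦ ∫ y in Iic x, K x y (f y))` on bounded continuous functions. -/
noncomputable def operator : (ℝ →ᵇ E) →L[ℝ] (ℝ →ᵇ E) :=
  LinearMap.mkContinuous
    { toFun := fun f => .ofNormedAddCommGroup (fun x => ∫ y in Iic x, K x y (f y))
        (hK.continuous_setIntegral_apply f) _ (hK.norm_setIntegral_apply_le_integral_mul_norm f)
      map_add' := fun f g => by
        ext x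
        simpa using integral_add (hK.integrableOn_apply f x) (hK.integrableOn_apply g x)
      map_smul' := fun c f => by
        ext x
        simpa using integral_smul c fun y => K x y (f y) }
    (∫ y, a y)
    fun f => BoundedContinuousFunction.norm_ofNormedAddCommGroup_le _
      (mul_nonneg (integral_nonneg hK.bound_nonneg) (norm_nonneg f))
      (hK.norm_setIntegral_apply_le_integral_mul_norm f)

theorem operator_apply (f : ℝ →ᵇ E) (x : ℝ) : hK.operator f x = ∫ y in Iic x, K x y (f y) :=
  rfl

theorem norm_operator_pow_apply_le (n : ℕ) (f : ℝ →ᵇ E) (x : ℝ) :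
    ‖(hK.operator ^ n) f x‖ ≤ (∫ y in Iic x, a y) ^ n / n ! * ‖f‖ := by
  induction n generalizing x with
  | zero => simpa using f.norm_coe_le_norm x
  | succ n ih =>
    have hbound (y : ℝ) : a y * ((∫ z in Iic y, a z) ^ n / n ! * ‖f‖) =
        a y * (∫ z in Iic y, a z) ^ n * (‖f‖ / n !) := by ring
    have hint := (integrable_mul_integral_Iic_pow hK.integrable n).mul_const (‖f‖ / n !)
    rw [pow_succ', mul_apply_eq_comp, operator_apply]
    refine (hK.norm_setIntegral_apply_le ih (by simpa only [hbound] using hint) x).trans_eq ?_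
    simp_rw [hbound]
    rw [integral_mul_const, integral_Iic_mul_integral_Iic_pow hK.integrable, Nat.factorial_succ]
    push_cast
    field_simp

theorem norm_operator_pow_le (n : ℕ) : ‖hK.operator ^ n‖ ≤ (∫ y, a y) ^ n / n ! := by
  have htotal : 0 ≤ ∫ y, a y := integral_nonneg hK.bound_nonneg
  refine ContinuousLinearMap.opNorm_le_bound _ (by positivity) fun f =>
    (BoundedContinuousFunction.norm_le (by positivity)).2 fun x => ?_
  have hprimitive_nonneg : 0 ≤ ∫ y in Iic x, a y := integral_nonneg hK.bound_nonneg
  have hprimitive_le : ∫ y in Iic x, a y ≤ ∫ y, a y :=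
    setIntegral_le_integral hK.integrable (.of_forall hK.bound_nonneg)
  exact (hK.norm_operator_pow_apply_le n f x).trans (by gcongr)

variable [CompleteSpace E]

theorem summable_operator_pow : Summable fun n : ℕ => hK.operator ^ n :=
  .of_norm_bounded (Real.summable_pow_div_factorial _) hK.norm_operator_pow_le

theorem hasSum_operator_pow_apply_iff {g f : ℝ →ᵇ E} :
    HasSum (fun n => (hK.operator ^ n) g) f ↔
      ∀ x, f x = g x + ∫ y in Iic x, K x y (f y) := by
  rw [hasSum_pow_apply_iff_eq_add hK.summable_operator_pow, DFunLike.ext_iff]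
  simp only [BoundedContinuousFunction.add_apply, operator_apply]

theorem existsUnique_eq_add_setIntegral (g : ℝ →ᵇ E) :
    ∃! f : ℝ →ᵇ E, ∀ x, f x = g x + ∫ y in Iic x, K x y (f y) := by
  simp_rw [← hK.hasSum_operator_pow_apply_iff]
  have hsummable : Summable fun n => (hK.operator ^ n) g :=
    (ContinuousLinearMap.apply ℝ _ g).summable hK.summable_operator_pow
  exact ⟨_, hsummable.hasSum, fun _ hf => hf.unique hsummable.hasSum⟩

end IsVolterraKernel

end Volterra

section ZakharovShabat

open Set Filter
open scoped BoundedContinuousFunction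

/-- The kernel that turns the integrated Zakharov–Shabat system for the normalized Jost solution
`f = (f₁, f₂)` into the single Volterra equation `f x = (0, 1) + ∫ y in Iic x, K x y (f y)`. -/
noncomputable def zakharovShabatKernel (U : ℝ → ℂ) (k : ℂ) (x y : ℝ) : ℂ × ℂ →L[ℝ] ℂ × ℂ :=
  ((exp (-2 * I * k * ((x : ℂ) - (y : ℂ))) * (2 * U y)) • ContinuousLinearMap.snd ℝ ℂ ℂ).prod
    (-(2 * U y) • ContinuousLinearMap.fst ℝ ℂ ℂ)

theorem zakharovShabatKernel_apply (U : ℝ → ℂ) (k : ℂ) (x y : ℝ) (v : ℂ × ℂ) :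
    zakharovShabatKernel U k x y v =
      (exp (-2 * I * k * ((x : ℂ) - (y : ℂ))) * (2 * U y) * v.2, -(2 * U y * v.1)) := by
  simp [zakharovShabatKernel]

theorem norm_exp_neg_two_I_mul_sub_le_one {k : ℂ} (hk : k.im ≤ 0) {x y : ℝ} (hyx : y ≤ x) :
    ‖exp (-2 * I * k * ((x : ℂ) - (y : ℂ)))‖ ≤ 1 := by
  have hre : (-2 * I * k * ((x : ℂ) - (y : ℂ))).re = 2 * k.im * (x - y) := by simp
  rw [norm_exp, Real.exp_le_one_iff, hre]
  exact mul_nonpos_of_nonpos_of_nonneg (by linarith) (sub_nonneg.2 hyx)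

theorem norm_zakharovShabatKernel_le (U : ℝ → ℂ) {k : ℂ} (hk : k.im ≤ 0) {x y : ℝ}
    (hyx : y ≤ x) : ‖zakharovShabatKernel U k x y‖ ≤ 2 * ‖U y‖ := by
  refine ContinuousLinearMap.opNorm_le_bound _ (by positivity) fun v => ?_
  rw [zakharovShabatKernel_apply]
  refine norm_prod_le_iff.2 ⟨?_, ?_⟩
  · calc ‖exp (-2 * I * k * ((x : ℂ) - (y : ℂ))) * (2 * U y) * v.2‖
        = ‖exp (-2 * I * k * ((x : ℂ) - (y : ℂ)))‖ * (2 * ‖U y‖ * ‖v.2‖) := by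
          rw [mul_assoc, norm_mul, norm_mul, norm_mul, RCLike.norm_two]
      _ ≤ 1 * (2 * ‖U y‖ * ‖v‖) := by
          gcongr
          exacts [norm_exp_neg_two_I_mul_sub_le_one hk hyx, norm_snd_le v]
      _ = 2 * ‖U y‖ * ‖v‖ := one_mul _
  · calc ‖-(2 * U y * v.1)‖ = 2 * ‖U y‖ * ‖v.1‖ := by
          rw [norm_neg, norm_mul, norm_mul, RCLike.norm_two]
      _ ≤ 2 * ‖U y‖ * ‖v‖ := by
          gcongr
          exact norm_fst_le v

theorem isVolterraKernel_zakharovShabatKernel {U : ℝ → ℂ} (hU : Integrable U) {k : ℂ}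
    (hk : k.im ≤ 0) : IsVolterraKernel (zakharovShabatKernel U k) fun y => 2 * ‖U y‖ where
  integrable := hU.norm.const_mul 2
  aestronglyMeasurable x := by
    have hexp : Continuous fun y : ℝ => exp (-2 * I * k * ((x : ℂ) - (y : ℂ))) := by fun_prop
    have hpotential := hU.aestronglyMeasurable.const_mul 2
    have hentries :=
      ((hexp.aestronglyMeasurable.mul hpotential).smul_const (ContinuousLinearMap.snd ℝ ℂ ℂ)).prodMk
        (hpotential.neg.smul_const (ContinuousLinearMap.fst ℝ ℂ ℂ))
    exact ((ContinuousLinearMap.prodₗᵢ ℝ).continuous.comp_aestronglyMeasurable hentries).restrict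
  continuousOn y := by
    have hexp : Continuous fun x : ℝ => exp (-2 * I * k * ((x : ℂ) - (y : ℂ))) := by fun_prop
    have hentry := (hexp.mul_const (2 * U y)).smul
      (continuous_const (y := ContinuousLinearMap.snd ℝ ℂ ℂ))
    exact ((ContinuousLinearMap.prodₗᵢ ℝ).continuous.comp
      (hentry.prodMk continuous_const)).continuousOn
  norm_le := norm_zakharovShabatKernel_le U hk

theorem eq_add_setIntegral_zakharovShabatKernel_iff {U : ℝ → ℂ} (hU : Integrable U) {k : ℂ}
    (hk : k.im ≤ 0) (f : ℝ →ᵇ ℂ × ℂ) (x : ℝ) :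
    f x = (0, 1) + ∫ y in Iic x, zakharovShabatKernel U k x y (f y) ↔
      (f x).1 = ∫ y in Iic x, exp (-2 * I * k * ((x : ℂ) - (y : ℂ))) * (2 * U y) * (f y).2 ∧
      (f x).2 = 1 - ∫ y in Iic x, 2 * U y * (f y).1 := by
  have hint := (isVolterraKernel_zakharovShabatKernel hU hk).integrableOn_apply f x
  rw [Prod.ext_iff, Prod.fst_add, Prod.snd_add, fst_integral hint, snd_integral hint]
  simp only [zakharovShabatKernel_apply, integral_neg, zero_add, ← sub_eq_add_neg]

theorem stmt_14_general {U : ℝ → ℂ} (hU : Integrable U) {k : ℂ} (hk : k.im ≤ 0) :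
    ∃! f : ℝ → ℂ × ℂ,
      (Continuous f ∧ Bornology.IsBounded (Set.range f)) ∧
      ∀ x : ℝ,
        (f x).1 = ∫ x' in Set.Iic x,
          Complex.exp (-2 * Complex.I * k * ((x : ℂ) - (x' : ℂ))) *
            (2 * U x') * (f x').2 ∧
        (f x).2 = 1 - ∫ x' in Set.Iic x, (2 * U x') * (f x').1 := by
  rw [← existsUnique_boundedContinuousFunction_iff]
  simp_rw [← eq_add_setIntegral_zakharovShabatKernel_iff hU hk]
  exact (isVolterraKernel_zakharovShabatKernel hU hk).existsUnique_eq_add_setIntegral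
    (.const ℝ (0, 1))

end ZakharovShabat

theorem stmt_14 (U : ℝ → ℝ) (hUc : Continuous U) (hUi : Integrable U)
    (k : ℂ) (hk : k.im ≤ 0) :
    ∃! f : ℝ → ℂ × ℂ,
      (Continuous f ∧ Bornology.IsBounded (Set.range f)) ∧
      ∀ x : ℝ,
        (f x).1 = ∫ x' in Set.Iic x,
          Complex.exp (-2 * Complex.I * k * ((x : ℂ) - (x' : ℂ))) *
            (2 * (U x' : ℂ)) * (f x').2 ∧
        (f x).2 = 1 - ∫ x' in Set.Iic x, (2 * (U x' : ℂ)) * (f x').1 :=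
  stmt_14_general hUi.ofReal hk
end
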